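/- arXiv:2211.09417 — 2 statements merged into one kernel-verified Lean document; each statement's English description precedes it below -/
import Mathlib

section
/- A binary word w is a prefix of some lower Christoffel word if and only if w is a power of the letter 1 (possibly the empty word) or w = 0·u for some binary word u such that both 0·u and 1·u are balanced (i.e., u is a left special balanced word). -/
/-- The lower Christoffel word `w_{a,b}`: the binary word of length `a+b` whose
`k`-th letter (1-based) is `⌊kb/(a+b)⌋ - ⌊(k-1)b/(a+b)⌋` (with `false = 0`, `true = 1`). -/
def lowerChristoffel (a b : ℕ) : List Bool :=
  (List.range (a + b)).map fun i => decide ((i + 1) * b / (a + b) ≠ i * b / (a + b))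

/-- The upper Christoffel word `W_{a,b}`: the binary word of length `a+b` whose
`k`-th letter is `⌈kb/(a+b)⌉ - ⌈(k-1)b/(a+b)⌉`. -/
def upperChristoffel (a b : ℕ) : List Bool :=
  (List.range (a + b)).map fun i =>
    decide (((i + 1) * b + (a + b) - 1) / (a + b) ≠ (i * b + (a + b) - 1) / (a + b))

/-- `p` is a period of `w`: `p` is positive and `w_i = w_{i+p}` for all valid indices. -/
def HasPeriod (w : List Bool) (p : ℕ) : Prop :=
  0 < p ∧ ∀ i, i + p < w.length → w.getD i false = w.getD (i + p) false

/-- A central word: a binary word with two coprime periods `p`, `q` and length `p + q - 2`. -/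
def IsCentral (w : List Bool) : Prop :=
  ∃ p q : ℕ, Nat.Coprime p q ∧ HasPeriod w p ∧ HasPeriod w q ∧ w.length + 2 = p + q

/-- A binary word is balanced if any two factors of the same length have numbers of `1`s
differing by at most `1`. -/
def BalancedWord (w : List Bool) : Prop :=
  ∀ u v : List Bool, u <:+: w → v <:+: w → u.length = v.length →
    |(u.count true : ℤ) - (v.count true : ℤ)| ≤ 1

/-- `w^m`: the `m`-th power of the word `w`. -/
def wpow (w : List Bool) (m : ℕ) : List Bool := (List.replicate m w).flatten

/-- A word is primitive if it is not a proper power. -/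
def IsPrimitiveWord (w : List Bool) : Prop := ¬ ∃ (v : List Bool) (m : ℕ), 2 ≤ m ∧ w = wpow v m

/-- A Lyndon word: a nonempty primitive word lexicographically strictly smaller than all
of its proper nonempty suffixes (for the order `0 < 1`, i.e. `false < true`). -/
def IsLyndonWord (w : List Bool) : Prop :=
  w ≠ [] ∧ IsPrimitiveWord w ∧
    ∀ u v : List Bool, w = u ++ v → u ≠ [] → v ≠ [] → List.Lex (· < ·) w v

/-- `p` is the minimal period of `w`. -/
def IsMinPeriod (w : List Bool) (p : ℕ) : Prop :=
  HasPeriod w p ∧ ∀ q : ℕ, HasPeriod w q → p ≤ q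

/-- `u` is a factor of the infinite periodic word `w^ω`. -/
def IsOmegaFactor (u w : List Bool) : Prop := ∃ m : ℕ, u <:+: wpow w m

/-- A primitive Christoffel word: a lower or upper Christoffel word `w_{a,b}` with
`gcd(a,b) = 1`. -/
def IsPrimitiveChristoffel (c : List Bool) : Prop :=
  ∃ a b : ℕ, Nat.Coprime a b ∧ (c = lowerChristoffel a b ∨ c = upperChristoffel a b)

/-!
Encode a word by its counting function `S k`, the number of ones among its first `k` letters. A
factor of length `l` starting at position `i` has `S (i + l) - S i` ones. For `w = 0u`, balancedness
of `0u` bounds this above by `S l + 1`, and balancedness of `1u`, whose prefixes carry one more one,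
bounds it below by `S l`. So `u` is left special exactly when
`S i + S l ≤ S (i + l) ≤ S i + S l + 1`. A function with this property is `k ↦ ⌊k p / q⌋`,
where `q` maximizes the slope `S q / q` and `p = S q`, and such floor functions are the counting
functions of prefixes of lower Christoffel words.
-/

/-- The number of ones among the first `k` letters of `w`. As a function of `k` it describes the
lattice path coded by `w`; it is constant beyond the length of `w`. -/
def onesInPrefix (w : List Bool) (k : ℕ) : ℕ := (w.take k).count true

/-- A word is left special if it can be extended to the left by either letter to a balanced word.
Balancedness of `u` itself is not listed, since `u` is a factor of `0u`. -/
def IsLeftSpecial (u : List Bool) : Prop := BalancedWord (false :: u) ∧ BalancedWord (true :: u)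

/-- Superadditivity with defect at most one, on arguments with sum at most `N`: the property of
counting functions that corresponds to left special words. Taking `i = 0` forces `S 0 = 0`. -/
def IsNearlyAdditive (S : ℕ → ℕ) (N : ℕ) : Prop :=
  ∀ i l, i + l ≤ N → S i + S l ≤ S (i + l) ∧ S (i + l) ≤ S i + S l + 1

section OnesInPrefix

variable {v w : List Bool}

@[simp]
theorem onesInPrefix_zero (w : List Bool) : onesInPrefix w 0 = 0 := by
  simp [onesInPrefix]

@[simp]
theorem onesInPrefix_length (w : List Bool) : onesInPrefix w w.length = w.count true := by
  simp [onesInPrefix]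

theorem onesInPrefix_succ {k : ℕ} (hk : k < w.length) :
    onesInPrefix w (k + 1) = onesInPrefix w k + w[k].toNat := by
  rw [onesInPrefix, ← List.take_concat_get' w k hk, List.count_append, onesInPrefix]
  cases w[k] <;> rfl

@[simp]
theorem onesInPrefix_cons_succ (c : Bool) (w : List Bool) (k : ℕ) :
    onesInPrefix (c :: w) (k + 1) = c.toNat + onesInPrefix w k := by
  cases c <;> simp [onesInPrefix, add_comm]

theorem onesInPrefix_true_cons {k : ℕ} (hk : 0 < k) :
    onesInPrefix (true :: w) k = onesInPrefix (false :: w) k + 1 := by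
  obtain ⟨k, rfl⟩ := Nat.exists_eq_add_of_le' hk
  simp [add_comm]

theorem onesInPrefix_add (w : List Bool) (i l : ℕ) :
    onesInPrefix w (i + l) = onesInPrefix w i + ((w.drop i).take l).count true := by
  rw [onesInPrefix, List.take_add, List.count_append, onesInPrefix]

theorem isPrefix_iff_onesInPrefix :
    w <+: v ↔
      w.length ≤ v.length ∧ ∀ k ≤ w.length, onesInPrefix w k = onesInPrefix v k := by
  constructor
  · rintro ⟨t, rfl⟩
    refine ⟨by simp, fun k hk => ?_⟩
    rw [onesInPrefix, onesInPrefix, List.take_append_of_le_length hk]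
  · rintro ⟨hlen, hcount⟩
    refine List.prefix_iff_getElem.2 ⟨hlen, fun k hk => ?_⟩
    have hnext := hcount (k + 1) hk
    rw [onesInPrefix_succ hk, onesInPrefix_succ (hk.trans_le hlen), hcount k hk.le] at hnext
    simpa only [Bool.ofNat_toNat] using congrArg Bool.ofNat (Nat.add_left_cancel hnext)

theorem balancedWord_iff_onesInPrefix :
    BalancedWord w ↔ ∀ i j l, i + l ≤ w.length → j + l ≤ w.length →
      onesInPrefix w (i + l) + onesInPrefix w j ≤
        onesInPrefix w (j + l) + onesInPrefix w i + 1 := by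
  constructor
  · intro hw i j l hi hj
    have factor (n : ℕ) : (w.drop n).take l <:+: w :=
      (List.take_prefix _ _).isInfix.trans (List.drop_suffix _ _).isInfix
    have hdiff := abs_le.1 (hw _ _ (factor i) (factor j) (by simp; omega))
    rw [onesInPrefix_add, onesInPrefix_add]
    omega
  · rintro hcount x y ⟨p, s, hx⟩ ⟨p', s', hy⟩ hlen
    have hx_len : p.length + x.length ≤ w.length := by simp [← hx]
    have hy_len : p'.length + x.length ≤ w.length := by simp [← hy, hlen]
    have hx_count := onesInPrefix_add w p.length x.length
    have hy_count := onesInPrefix_add w p'.length x.length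
    rw [show (w.drop p.length).take x.length = x by simp [← hx]] at hx_count
    rw [show (w.drop p'.length).take x.length = y by simp [← hy, hlen]] at hy_count
    have hxy := hcount _ _ _ hx_len hy_len
    have hyx := hcount _ _ _ hy_len hx_len
    rw [abs_le]
    omega

theorem balancedWord_of_window_bounds {m : ℕ → ℕ}
    (hm : ∀ i l, i + l ≤ w.length → onesInPrefix w i + m l ≤ onesInPrefix w (i + l) ∧
      onesInPrefix w (i + l) ≤ onesInPrefix w i + m l + 1) : BalancedWord w := by
  refine balancedWord_iff_onesInPrefix.2 fun i j l hi hj => ?_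
  have hwindow_i := (hm i l hi).2
  have hwindow_j := (hm j l hj).1
  omega

end OnesInPrefix

section NearlyAdditive

variable {S : ℕ → ℕ} {N : ℕ}

theorem isNearlyAdditive_mul_div (p : ℕ) {q : ℕ} (hq : 0 < q) (N : ℕ) :
    IsNearlyAdditive (fun k => k * p / q) N := by
  intro i l _
  simp only [add_mul, Nat.add_div hq]
  split_ifs <;> omega

/-- The induction is the subtractive Euclidean algorithm on `(j, k)`: each bound of near
additivity handles one of its two steps. -/
theorem IsNearlyAdditive.mul_lt_mul_add_one (hS : IsNearlyAdditive S N) (j k : ℕ) (hk : 0 < k)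
    (hjN : j ≤ N) (hkN : k ≤ N) : j * S k < k * (S j + 1) := by
  rcases Nat.eq_zero_or_pos j with rfl | hj
  · simpa using hk
  rcases le_or_gt k j with hkj | hjk
  · obtain ⟨d, rfl⟩ := Nat.exists_eq_add_of_le' hkj
    have ih := hS.mul_lt_mul_add_one d k hk (by omega) hkN
    calc (d + k) * S k = d * S k + k * S k := add_mul ..
      _ < k * (S d + 1) + k * S k := by gcongr
      _ = k * (S d + S k + 1) := by ring
      _ ≤ k * (S (d + k) + 1) := by gcongr; exact (hS d k hjN).1
  · obtain ⟨d, rfl⟩ := Nat.exists_eq_add_of_le' hjk.le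
    have ih := hS.mul_lt_mul_add_one j d (by omega) hjN (by omega)
    calc j * S (d + j) ≤ j * (S d + S j + 1) := by gcongr; exact (hS d j hkN).2
      _ = j * S d + j * (S j + 1) := by ring
      _ < d * (S j + 1) + j * (S j + 1) := by gcongr
      _ = (d + j) * (S j + 1) := (add_mul ..).symm
termination_by j + k

theorem exists_max_slope (S : ℕ → ℕ) {N : ℕ} (hN : 0 < N) :
    ∃ q, 0 < q ∧ q ≤ N ∧ ∀ k, 0 < k → k ≤ N → q * S k ≤ k * S q := by
  obtain ⟨q, hq, hmax⟩ := Finset.exists_max_image (Finset.Icc 1 N)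
    (fun k => (S k : ℚ) / k) (Finset.nonempty_Icc.2 hN)
  obtain ⟨hq_pos, hqN⟩ := Finset.mem_Icc.1 hq
  refine ⟨q, hq_pos, hqN, fun k hk hkN => ?_⟩
  have hslope := hmax k (Finset.mem_Icc.2 ⟨hk, hkN⟩)
  rw [div_le_div_iff₀ (by exact_mod_cast hk) (by exact_mod_cast hq_pos)] at hslope
  rw [mul_comm q, mul_comm k]
  exact_mod_cast hslope

theorem isNearlyAdditive_iff_exists_eq_mul_div :
    IsNearlyAdditive S N ↔ ∃ p q, 0 < q ∧ ∀ k ≤ N, S k = k * p / q := by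
  constructor
  · intro hS
    have hS_zero : S 0 = 0 := by simpa using (hS 0 0 (Nat.zero_le N)).1
    rcases Nat.eq_zero_or_pos N with rfl | hN
    · exact ⟨0, 1, one_pos, by simpa using hS_zero⟩
    obtain ⟨q, hq, hqN, hmax⟩ := exists_max_slope S hN
    refine ⟨S q, q, hq, fun k hkN => ?_⟩
    rcases Nat.eq_zero_or_pos k with rfl | hk
    · simpa using hS_zero
    refine (Nat.div_eq_of_lt_le ?_ ?_).symm
    · rw [mul_comm (S k)]
      exact hmax k hk hkN
    · rw [mul_comm (S k + 1)]
      exact hS.mul_lt_mul_add_one k q hq hkN hqN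
  · rintro ⟨p, q, hq, hfloor⟩ i l hil
    rw [hfloor i (by omega), hfloor l (by omega), hfloor (i + l) hil]
    exact isNearlyAdditive_mul_div p hq N i l hil

end NearlyAdditive

section LeftSpecial

variable {u : List Bool}

theorem IsLeftSpecial.isNearlyAdditive (hu : IsLeftSpecial u) :
    IsNearlyAdditive (onesInPrefix (false :: u)) (u.length + 1) := by
  obtain ⟨hfalse, htrue⟩ := hu
  rw [balancedWord_iff_onesInPrefix, List.length_cons] at hfalse htrue
  intro i l hil
  rcases Nat.eq_zero_or_pos i with rfl | hi
  · simp
  rcases Nat.eq_zero_or_pos l with rfl | hl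
  · simp
  have hupper := hfalse i 0 l hil (by omega)
  have hlower := htrue 0 i l (by omega) hil
  simp only [zero_add, onesInPrefix_zero, onesInPrefix_true_cons, hi, hl,
    Nat.add_pos_left] at hupper hlower
  omega

theorem IsNearlyAdditive.isLeftSpecial
    (hS : IsNearlyAdditive (onesInPrefix (false :: u)) (u.length + 1)) : IsLeftSpecial u := by
  refine ⟨balancedWord_of_window_bounds hS, balancedWord_of_window_bounds
    (m := onesInPrefix (false :: u)) fun i l hil => ?_⟩
  rcases Nat.eq_zero_or_pos l with rfl | hl
  · simp
  rcases Nat.eq_zero_or_pos i with rfl | hi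
  · simp [onesInPrefix_true_cons hl]
  have hwindow := hS i l hil
  rw [onesInPrefix_true_cons hi, onesInPrefix_true_cons (Nat.add_pos_left hi l)]
  omega

theorem isLeftSpecial_iff_isNearlyAdditive :
    IsLeftSpecial u ↔ IsNearlyAdditive (onesInPrefix (false :: u)) (u.length + 1) :=
  ⟨IsLeftSpecial.isNearlyAdditive, IsNearlyAdditive.isLeftSpecial⟩

end LeftSpecial

section LowerChristoffel

theorem length_lowerChristoffel (a b : ℕ) : (lowerChristoffel a b).length = a + b := by
  simp [lowerChristoffel]

theorem onesInPrefix_lowerChristoffel {a b k : ℕ} (hk : k ≤ a + b) :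
    onesInPrefix (lowerChristoffel a b) k = k * b / (a + b) := by
  induction k with
  | zero => simp
  | succ k ih =>
    have hmono : k * b / (a + b) ≤ (k + 1) * b / (a + b) := by gcongr; omega
    have hstep : (k + 1) * b / (a + b) ≤ k * b / (a + b) + 1 := by
      rw [← Nat.add_div_right _ (by omega), add_one_mul]
      gcongr
      omega
    rw [onesInPrefix_succ (by rwa [length_lowerChristoffel]), ih (by omega)]
    simp only [lowerChristoffel, List.getElem_map, List.getElem_range]
    by_cases h : (k + 1) * b / (a + b) = k * b / (a + b)
    · simp [h]
    · simp only [ne_eq, h, not_false_eq_true, decide_true, Bool.toNat_true]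
      omega

theorem exists_isPrefix_lowerChristoffel_iff {w : List Bool} :
    (∃ a b : ℕ, (a ≠ 0 ∨ b ≠ 0) ∧ w <+: lowerChristoffel a b) ↔
      ∃ p q, 0 < q ∧ p ≤ q ∧ ∀ k ≤ w.length, onesInPrefix w k = k * p / q := by
  simp only [isPrefix_iff_onesInPrefix, length_lowerChristoffel]
  constructor
  · rintro ⟨a, b, hab, hlen, hcount⟩
    refine ⟨b, a + b, by omega, by omega, fun k hk => ?_⟩
    rw [hcount k hk, onesInPrefix_lowerChristoffel (hk.trans hlen)]
  · rintro ⟨p, q, hq, hpq, hcount⟩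
    -- Scaling keeps the slope `p / q` and makes the Christoffel word long enough.
    let n := w.length + 1
    have hsum : n * (q - p) + n * p = n * q := by rw [← mul_add, Nat.sub_add_cancel hpq]
    have hlen : w.length ≤ n * q := (Nat.le_succ _).trans (Nat.le_mul_of_pos_right n hq)
    have hpos : 0 < n * q := by positivity
    refine ⟨n * (q - p), n * p, by omega, hsum ▸ hlen, fun k hk => ?_⟩
    rw [onesInPrefix_lowerChristoffel (hsum ▸ hk.trans hlen), hsum, mul_left_comm,
      Nat.mul_div_mul_left _ _ (Nat.succ_pos _), hcount k hk]

theorem exists_false_cons_isPrefix_lowerChristoffel_iff {u : List Bool} :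
    (∃ a b : ℕ, (a ≠ 0 ∨ b ≠ 0) ∧ false :: u <+: lowerChristoffel a b) ↔ IsLeftSpecial u := by
  rw [exists_isPrefix_lowerChristoffel_iff, isLeftSpecial_iff_isNearlyAdditive,
    isNearlyAdditive_iff_exists_eq_mul_div]
  constructor
  · rintro ⟨p, q, hq, -, hcount⟩
    exact ⟨p, q, hq, hcount⟩
  · rintro ⟨p, q, hq, hcount⟩
    have hdiv : p / q = 0 := by simpa using (hcount 1 (by omega)).symm
    exact ⟨p, q, hq, ((Nat.div_eq_zero_iff_lt hq).1 hdiv).le, hcount⟩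

theorem exists_true_cons_isPrefix_lowerChristoffel_iff {u : List Bool} :
    (∃ a b : ℕ, (a ≠ 0 ∨ b ≠ 0) ∧ true :: u <+: lowerChristoffel a b) ↔
      ∃ m, true :: u = List.replicate m true := by
  rw [exists_isPrefix_lowerChristoffel_iff]
  constructor
  · rintro ⟨p, q, hq, hpq, hcount⟩
    have hdiv : p / q = 1 := by simpa using (hcount 1 (by simp)).symm
    have hslope : p = q := hpq.antisymm ((Nat.one_le_div_iff hq).1 hdiv.ge)
    have hall := hcount _ le_rfl
    rw [onesInPrefix_length, hslope, Nat.mul_div_cancel _ hq, List.count_eq_length] at hall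
    exact ⟨_, List.eq_replicate_iff.2 ⟨rfl, fun c hc => (hall c hc).symm⟩⟩
  · rintro ⟨m, hm⟩
    refine ⟨1, 1, one_pos, le_rfl, fun k hk => ?_⟩
    rw [hm, List.length_replicate] at hk
    simp [hm, onesInPrefix, List.take_replicate, hk]

end LowerChristoffel

/-- A binary word is a prefix of some lower Christoffel word iff it is a
power of the letter `1` or of the form `0·u` for a left special balanced word `u`. -/
theorem stmt17 (w : List Bool) :
    (∃ a b : ℕ, (a ≠ 0 ∨ b ≠ 0) ∧ w <+: lowerChristoffel a b) ↔
    ((∃ m : ℕ, w = List.replicate m true) ∨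
      ∃ u : List Bool, w = false :: u ∧
        BalancedWord (false :: u) ∧ BalancedWord (true :: u)) := by
  rcases w with _ | ⟨_ | _, u⟩
  · exact iff_of_true ⟨0, 1, .inr one_ne_zero, List.nil_prefix⟩ (.inl ⟨0, rfl⟩)
  · rw [exists_false_cons_isPrefix_lowerChristoffel_iff]
    simp [IsLeftSpecial, List.eq_replicate_iff]
  · rw [exists_true_cons_isPrefix_lowerChristoffel_iff]
    simp
end

section
/- Let n ≥ 1 and let PLC(n) be the set of binary words of length n that are prefixes of lower Christoffel words. Every v ∈ PLC(n) can be written uniquely as v = w^m·w', where w is a primitive lower Christoffel word, m ≥ 1, and w' is a proper (possibly empty) prefix of w; this w is called the primitive root √v of v. The map v ↦ |√v|_1 / |√v| is a bijection from PLC(n) onto the set of rational numbers h/k with 0 ≤ h ≤ k ≤ n and gcd(h,k) = 1 (the Farey fractions of order n lying in [0,1]), and this map is strictly increasing from the lexicographic order (with 0 < 1) on PLC(n) to the usual order on the rationals. -/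
/-- `PLC n`: the set of binary words of length `n` that are prefixes of lower Christoffel
words. -/
def PLC (n : ℕ) : Set (List Bool) :=
  {v | v.length = n ∧ ∃ a b : ℕ, (a ≠ 0 ∨ b ≠ 0) ∧ v <+: lowerChristoffel a b}

/-- `w` is the primitive root of `v`: `w` is a primitive lower Christoffel word and
`v = w^m · w'` for some `m ≥ 1` and proper (possibly empty) prefix `w'` of `w`. -/
def IsPrimRoot (v w : List Bool) : Prop :=
  (∃ a b : ℕ, Nat.Coprime a b ∧ w = lowerChristoffel a b) ∧
    ∃ (m : ℕ) (w' : List Bool), 1 ≤ m ∧ w' <+: w ∧ w' ≠ w ∧ v = wpow w m ++ w'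

/-! The words of `PLC n` are the prefixes of length `n` of the mechanical words of rational slope in
`[0,1]`; in slope `q`, the prefix of length `i` contains `⌊iq⌋` ones. Such a word therefore depends
only on the floors `⌊iq⌋` with `i ≤ n`, which are unchanged when `q` is lowered to the largest Farey
fraction of order `n` below it. For Farey fractions `q < q'` the floors at `i = q'.den` differ, so
the word strictly increases with the slope. Finally, the mechanical word of slope `q` is periodic,
and its first `q.den` letters form the Christoffel word of slope `q`: dividing `n` by `q.den` gives
the factorization `w^m·w'`, and any such factorization exhibits the word as a mechanical word of
slope `|w|₁ / |w|`. -/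

/-- The prefix of length `n` of the lower mechanical word of slope `x` and intercept `0`, whose
`i`-th letter (0-based) is `⌊(i+1)x⌋ - ⌊ix⌋`. The letter is encoded as the test that the two floors
differ, which is the same thing for `0 ≤ x ≤ 1`, and the truncation `⌊·⌋₊` only matters for
negative slopes. -/
def mechanicalWord {K : Type*} [Semiring K] [PartialOrder K] [FloorSemiring K] (x : K) (n : ℕ) :
    List Bool :=
  (List.range n).map fun i => decide (⌊((i + 1 : ℕ) : K) * x⌋₊ ≠ ⌊(i : K) * x⌋₊)

/-- The Farey fractions of order `n` in `[0,1]`. -/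
def fareyFractions (n : ℕ) : Set ℚ :=
  {q | 0 ≤ q ∧ q ≤ 1 ∧ q.den ≤ n}

/-- The density `|w|₁ / |w|` of the letter `1` in `w` (which is `0` for the empty word). -/
def oneDensity (w : List Bool) : ℚ :=
  (w.count true : ℚ) / (w.length : ℚ)

/-- The factorization `v = w^m·w'` of `v` by a primitive lower Christoffel word `w`, with `m ≥ 1`
and `w'` a proper prefix of `w`; the `w` that occur in it are the primitive roots of `v`. -/
def IsChristoffelFactorization (v w : List Bool) (m : ℕ) (w' : List Bool) : Prop :=
  (∃ a b : ℕ, Nat.Coprime a b ∧ w = lowerChristoffel a b) ∧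
    1 ≤ m ∧ w' <+: w ∧ w' ≠ w ∧ v = wpow w m ++ w'

lemma isPrimRoot_iff {v w : List Bool} :
    IsPrimRoot v w ↔ ∃ m w', IsChristoffelFactorization v w m w' := by
  simp only [IsPrimRoot, IsChristoffelFactorization, exists_and_left]

lemma le_of_forall_count_true_take_le {u v : List Bool} (hlen : u.length ≤ v.length)
    (hcount : ∀ i, (u.take i).count true ≤ (v.take i).count true) : u ≤ v := by
  induction u generalizing v with
  | nil => exact not_lt.mp (List.not_lt_nil v)
  | cons a u ih =>
    obtain _ | ⟨b, v⟩ := v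
    · simp at hlen
    have hhead : [a].count true ≤ [b].count true := by simpa using hcount 1
    refine not_lt.mp fun hlt => ?_
    obtain hba | ⟨rfl, htail⟩ := List.cons_lt_cons_iff.mp hlt
    · obtain ⟨rfl, rfl⟩ := Bool.lt_iff.mp hba
      simp at hhead
    · refine htail.not_ge (ih (by simpa using hlen) fun i => ?_)
      simpa [List.count_cons] using hcount (i + 1)

lemma count_true_map_range_decide_ne {g : ℕ → ℕ} (hzero : g 0 = 0) (hmono : Monotone g)
    (hstep : ∀ i, g (i + 1) ≤ g i + 1) (n : ℕ) :
    ((List.range n).map fun i => decide (g (i + 1) ≠ g i)).count true = g n := by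
  induction n with
  | zero => simp [hzero]
  | succ n ih =>
    have hle : g n ≤ g (n + 1) := hmono n.le_succ
    have hge := hstep n
    rw [List.range_succ, List.map_append, List.count_append, ih, List.map_singleton,
      List.count_singleton]
    by_cases h : g (n + 1) = g n
    · simp [h]
    · simp only [ne_eq, h, not_false_eq_true, decide_true, beq_self_eq_true, if_true]
      lia

section MechanicalWord

variable {K : Type*}

section PartialOrder

variable [Semiring K] [PartialOrder K] [FloorSemiring K] {x : K} {m n : ℕ}

@[simp]
lemma length_mechanicalWord (x : K) (n : ℕ) : (mechanicalWord x n).length = n := by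
  simp [mechanicalWord]

lemma take_mechanicalWord (x : K) (m n : ℕ) :
    (mechanicalWord x n).take m = mechanicalWord x (min m n) := by
  rw [mechanicalWord, ← List.map_take, List.take_range, mechanicalWord]

lemma mechanicalWord_prefix (x : K) (hmn : m ≤ n) :
    mechanicalWord x m <+: mechanicalWord x n := by
  rw [List.prefix_iff_eq_take, length_mechanicalWord, take_mechanicalWord, min_eq_left hmn]

lemma eq_mechanicalWord_of_prefix {v : List Bool} (hv : v <+: mechanicalWord x n) :
    v = mechanicalWord x v.length := by
  have hlen : v.length ≤ n := by simpa using hv.length_le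
  rwa [List.prefix_iff_eq_take, take_mechanicalWord, min_eq_left hlen] at hv

lemma mechanicalWord_congr {L : Type*} [Semiring L] [PartialOrder L] [FloorSemiring L] {z : L}
    (hfloor : ∀ i ≤ n, ⌊(i : K) * x⌋₊ = ⌊(i : L) * z⌋₊) :
    mechanicalWord x n = mechanicalWord z n := by
  refine List.map_congr_left fun i hi => ?_
  have hi : i < n := List.mem_range.mp hi
  rw [hfloor i hi.le, hfloor (i + 1) hi]

end PartialOrder

section OrderedSemiring

variable [Semiring K] [LinearOrder K] [IsStrictOrderedRing K] [FloorSemiring K]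
  {x y : K} {h k n : ℕ}

lemma count_true_mechanicalWord (hx₀ : 0 ≤ x) (hx₁ : x ≤ 1) (n : ℕ) :
    (mechanicalWord x n).count true = ⌊(n : K) * x⌋₊ := by
  refine count_true_map_range_decide_ne (g := fun i => ⌊(i : K) * x⌋₊) (by simp)
    (fun i j hij => by dsimp only; gcongr) (fun i => ?_) n
  rw [← Nat.floor_add_one (by positivity)]
  gcongr
  rw [Nat.cast_add_one, add_one_mul]
  gcongr

lemma mechanicalWord_mono (hx : 0 ≤ x) (hxy : x ≤ y) (hy : y ≤ 1) (n : ℕ) :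
    mechanicalWord x n ≤ mechanicalWord y n := by
  refine le_of_forall_count_true_take_le (by simp) fun i => ?_
  rw [take_mechanicalWord, take_mechanicalWord, count_true_mechanicalWord hx (hxy.trans hy),
    count_true_mechanicalWord (hx.trans hxy) hy]
  gcongr

/-- The two words already differ in their number of `1`s among the first `k` letters. -/
lemma mechanicalWord_lt (hx : 0 ≤ x) (hxy : x < y) (hy : y ≤ 1) (hk : 0 < k) (hkn : k ≤ n)
    (hky : (k : K) * y = h) : mechanicalWord x n < mechanicalWord y n := by
  refine (mechanicalWord_mono hx hxy.le hy n).lt_of_ne fun heq => ?_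
  have htake : mechanicalWord x k = mechanicalWord y k := by
    simpa only [take_mechanicalWord, min_eq_left hkn] using congrArg (List.take k) heq
  have hfloor : ⌊(k : K) * x⌋₊ = h := by
    rw [← count_true_mechanicalWord hx (hxy.le.trans hy), htake,
      count_true_mechanicalWord (hx.trans hxy.le) hy, hky, Nat.floor_natCast]
  have hle : (k : K) * y ≤ k * x := by
    rw [hky, ← hfloor]
    exact Nat.floor_le (by positivity)
  exact absurd (le_of_mul_le_mul_left hle (by exact_mod_cast hk)) hxy.not_ge

lemma mechanicalWord_add (hx : 0 ≤ x) (hkx : (k : K) * x = h) (r : ℕ) :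
    mechanicalWord x (k + r) = mechanicalWord x k ++ mechanicalWord x r := by
  have hfloor (j : ℕ) : ⌊((k + j : ℕ) : K) * x⌋₊ = ⌊(j : K) * x⌋₊ + h := by
    rw [Nat.cast_add, add_mul, hkx, add_comm, Nat.floor_add_natCast (by positivity)]
  simp only [mechanicalWord, List.range_add, List.map_append, List.map_map, Function.comp_def,
    add_assoc k, hfloor, ne_eq, Nat.add_right_cancel_iff]

lemma mechanicalWord_mul_add (hx : 0 ≤ x) (hkx : (k : K) * x = h) (m r : ℕ) :
    mechanicalWord x (k * m + r) = wpow (mechanicalWord x k) m ++ mechanicalWord x r := by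
  induction m with
  | zero => simp [wpow]
  | succ m ih =>
    rw [show k * (m + 1) + r = k + (k * m + r) by ring, mechanicalWord_add hx hkx, ih]
    simp [wpow, List.replicate_succ]

end OrderedSemiring

section Field

variable [Field K] [LinearOrder K] [IsStrictOrderedRing K] [FloorSemiring K] {x : K} {n : ℕ}

lemma lowerChristoffel_eq_mechanicalWord {a b : ℕ} (hx : ((a + b : ℕ) : K) * x = b) :
    lowerChristoffel a b = mechanicalWord x (a + b) := by
  refine List.map_congr_left fun i hi => ?_
  have hpos : ((a + b : ℕ) : K) ≠ 0 := by
    exact_mod_cast (i.zero_le.trans_lt (List.mem_range.mp hi)).ne'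
  have hfloor (j : ℕ) : ⌊(j : K) * x⌋₊ = j * b / (a + b) := by
    rw [eq_div_of_mul_eq hpos ((mul_comm _ _).trans hx), ← mul_div_assoc, ← Nat.cast_mul,
      Nat.floor_div_eq_div]
  rw [hfloor, hfloor]

/-- The Farey fraction is the largest of the quotients `⌊ix⌋ / i` with `1 ≤ i ≤ n`. -/
lemma exists_mem_fareyFractions_mechanicalWord_eq (hx₀ : 0 ≤ x) (hx₁ : x ≤ 1) (hn : 1 ≤ n) :
    ∃ q ∈ fareyFractions n, mechanicalWord q n = mechanicalWord x n := by
  obtain ⟨j, hj, hmax⟩ := Finset.exists_max_image (Finset.Icc 1 n)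
    (fun i : ℕ => (⌊(i : K) * x⌋₊ : ℚ) / i) ⟨1, by simp [hn]⟩
  obtain ⟨hj₁, hjn⟩ := Finset.mem_Icc.mp hj
  set q : ℚ := (⌊(j : K) * x⌋₊ : ℚ) / j with hq
  have hq₀ : 0 ≤ q := by positivity
  have hqx : (q : K) ≤ x := by
    have hjpos : (0 : K) < j := by exact_mod_cast hj₁
    rw [hq, Rat.cast_div, Rat.cast_natCast, Rat.cast_natCast, div_le_iff₀ hjpos, mul_comm x]
    exact Nat.floor_le (by positivity)
  have hden : q.den ≤ n := by
    have hdvd : (q.den : ℤ) ∣ j := by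
      simpa [hq, Rat.divInt_eq_div] using Rat.den_dvd ⌊(j : K) * x⌋₊ j
    exact (Nat.le_of_dvd hj₁ (Int.natCast_dvd_natCast.mp hdvd)).trans hjn
  refine ⟨q, ⟨hq₀, by exact_mod_cast hqx.trans hx₁, hden⟩, mechanicalWord_congr fun i hi => ?_⟩
  apply le_antisymm
  · have hfloor : ((⌊(i : ℚ) * q⌋₊ : ℚ) : K) ≤ ((i * q : ℚ) : K) := by
      exact_mod_cast Nat.floor_le (show 0 ≤ (i : ℚ) * q by positivity)
    push_cast at hfloor
    exact Nat.le_floor (hfloor.trans (by gcongr))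
  · obtain rfl | hi₀ := i.eq_zero_or_pos
    · simp
    · have hipos : (0 : ℚ) < i := by exact_mod_cast hi₀
      have hle := hmax i (Finset.mem_Icc.mpr ⟨hi₀, hi⟩)
      rw [div_le_iff₀ hipos, mul_comm q] at hle
      exact Nat.le_floor hle

end Field

end MechanicalWord

section Rational

variable {q : ℚ} {m n : ℕ} {v w w' : List Bool}

lemma den_mul_eq_natAbs_num (hq : 0 ≤ q) : (q.den : ℚ) * q = q.num.natAbs := by
  rw [Rat.den_mul_eq_num, Nat.cast_natAbs, abs_of_nonneg (Rat.num_nonneg.mpr hq)]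

lemma exists_coprime_add_eq_den (hq₀ : 0 ≤ q) (hq₁ : q ≤ 1) :
    ∃ a b : ℕ, Nat.Coprime a b ∧ a + b = q.den ∧ ((a + b : ℕ) : ℚ) * q = b := by
  have hle : q.num.natAbs ≤ q.den := by
    have : (q.num.natAbs : ℚ) ≤ q.den := by
      rw [← den_mul_eq_natAbs_num hq₀]
      exact mul_le_of_le_one_right (by positivity) hq₁
    exact_mod_cast this
  obtain ⟨a, ha⟩ := Nat.exists_eq_add_of_le' hle
  refine ⟨a, q.num.natAbs, ?_, ha.symm, by rw [← ha, den_mul_eq_natAbs_num hq₀]⟩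
  have hcop : Nat.Coprime q.num.natAbs q.den := q.reduced
  rw [ha, Nat.coprime_add_self_right] at hcop
  exact hcop.symm

lemma exists_eq_lowerChristoffel_iff :
    (∃ a b : ℕ, Nat.Coprime a b ∧ w = lowerChristoffel a b) ↔
      ∃ q : ℚ, 0 ≤ q ∧ q ≤ 1 ∧ w = mechanicalWord q q.den := by
  constructor
  · rintro ⟨a, b, hab, rfl⟩
    have hpos : a + b ≠ 0 := by
      intro hzero
      obtain ⟨rfl, rfl⟩ := Nat.add_eq_zero_iff.mp hzero
      simp at hab
    have hden : ((b : ℚ) / (a + b : ℕ)).den = a + b := by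
      have hcop : Nat.Coprime b (a + b) := Nat.coprime_add_self_right.mpr hab.symm
      have := Rat.den_div_eq_of_coprime (a := b) (b := (a + b : ℕ)) (by lia) hcop
      rwa [Int.cast_natCast, Int.cast_natCast, Int.natCast_inj] at this
    refine ⟨(b : ℚ) / (a + b : ℕ), by positivity,
      div_le_one_of_le₀ (by exact_mod_cast b.le_add_left a) (by positivity), ?_⟩
    rw [hden]
    exact lowerChristoffel_eq_mechanicalWord (mul_div_cancel₀ _ (by exact_mod_cast hpos))
  · rintro ⟨q, hq₀, hq₁, rfl⟩
    obtain ⟨a, b, hab, hden, hmul⟩ := exists_coprime_add_eq_den hq₀ hq₁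
    exact ⟨a, b, hab, by rw [lowerChristoffel_eq_mechanicalWord hmul, hden]⟩

lemma mem_PLC_iff : v ∈ PLC n ↔ ∃ q : ℚ, 0 ≤ q ∧ q ≤ 1 ∧ v = mechanicalWord q n := by
  constructor
  · rintro ⟨rfl, a, b, hab, hv⟩
    have hpos : ((a + b : ℕ) : ℚ) ≠ 0 := by exact_mod_cast (by lia : a + b ≠ 0)
    rw [lowerChristoffel_eq_mechanicalWord (mul_div_cancel₀ (b : ℚ) hpos)] at hv
    exact ⟨_, by positivity, div_le_one_of_le₀ (by exact_mod_cast b.le_add_left a) (by positivity),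
      eq_mechanicalWord_of_prefix hv⟩
  · rintro ⟨q, hq₀, hq₁, rfl⟩
    obtain ⟨a, b, -, hden, hmul⟩ := exists_coprime_add_eq_den hq₀ hq₁
    have hpos : 0 < a + b := hden ▸ q.den_pos
    refine ⟨length_mechanicalWord q n, (n + 1) * a, (n + 1) * b, ?_, ?_⟩
    · simp only [ne_eq, mul_eq_zero]
      lia
    · rw [lowerChristoffel_eq_mechanicalWord (x := q)
        (by rw [← mul_add, Nat.cast_mul, mul_assoc, hmul, Nat.cast_mul]), ← mul_add]
      exact mechanicalWord_prefix q (by nlinarith)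

lemma strictMonoOn_mechanicalWord (n : ℕ) :
    StrictMonoOn (fun q : ℚ => mechanicalWord q n) (fareyFractions n) :=
  fun _ hp q ⟨hq₀, hq₁, hqn⟩ hpq =>
    mechanicalWord_lt hp.1 hpq hq₁ q.den_pos hqn (den_mul_eq_natAbs_num hq₀)

lemma bijOn_mechanicalWord (hn : 1 ≤ n) :
    Set.BijOn (fun q : ℚ => mechanicalWord q n) (fareyFractions n) (PLC n) := by
  refine ⟨fun q hq => mem_PLC_iff.mpr ⟨q, hq.1, hq.2.1, rfl⟩,
    (strictMonoOn_mechanicalWord n).injOn, fun v hv => ?_⟩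
  obtain ⟨x, hx₀, hx₁, rfl⟩ := mem_PLC_iff.mp hv
  exact exists_mem_fareyFractions_mechanicalWord_eq hx₀ hx₁ hn

lemma oneDensity_mechanicalWord_den (hq₀ : 0 ≤ q) (hq₁ : q ≤ 1) :
    oneDensity (mechanicalWord q q.den) = q := by
  have hden : (q.den : ℚ) ≠ 0 := by exact_mod_cast q.den_nz
  rw [oneDensity, count_true_mechanicalWord hq₀ hq₁, length_mechanicalWord,
    den_mul_eq_natAbs_num hq₀, Nat.floor_natCast, ← den_mul_eq_natAbs_num hq₀,
    mul_div_cancel_left₀ _ hden]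

lemma isChristoffelFactorization_mechanicalWord (hq : q ∈ fareyFractions n) :
    IsChristoffelFactorization (mechanicalWord q n)
      (mechanicalWord q q.den) (n / q.den) (mechanicalWord q (n % q.den)) := by
  obtain ⟨hq₀, hq₁, hqn⟩ := hq
  have hlt : n % q.den < q.den := Nat.mod_lt n q.den_pos
  refine ⟨exists_eq_lowerChristoffel_iff.mpr ⟨q, hq₀, hq₁, rfl⟩, Nat.div_pos hqn q.den_pos,
    mechanicalWord_prefix q hlt.le, fun heq => hlt.ne ?_, ?_⟩
  · simpa using congrArg List.length heq
  · rw [← mechanicalWord_mul_add hq₀ (den_mul_eq_natAbs_num hq₀), Nat.div_add_mod]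

lemma exists_mem_fareyFractions_of_isChristoffelFactorization
    (hv : IsChristoffelFactorization v w m w') :
    ∃ q ∈ fareyFractions v.length, v = mechanicalWord q v.length ∧ w = mechanicalWord q q.den ∧
      m = v.length / q.den ∧ w' = mechanicalWord q (v.length % q.den) := by
  obtain ⟨hw, hm, hpre, hne, hv⟩ := hv
  obtain ⟨q, hq₀, hq₁, rfl⟩ := exists_eq_lowerChristoffel_iff.mp hw
  have hw' := eq_mechanicalWord_of_prefix hpre
  have hlt : w'.length < q.den := by
    refine lt_of_le_of_ne (by simpa using hpre.length_le) fun hlen => hne ?_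
    rwa [hlen] at hw'
  rw [hw', ← mechanicalWord_mul_add hq₀ (den_mul_eq_natAbs_num hq₀)] at hv
  have hlen : v.length = q.den * m + w'.length := by rw [hv, length_mechanicalWord]
  have hdiv : v.length / q.den = m := by
    rw [hlen, Nat.mul_add_div q.den_pos, Nat.div_eq_of_lt hlt, add_zero]
  have hmod : v.length % q.den = w'.length := by
    rw [hlen, Nat.mul_add_mod, Nat.mod_eq_of_lt hlt]
  refine ⟨q, ⟨hq₀, hq₁, ?_⟩, hlen ▸ hv, rfl, hdiv.symm, hmod ▸ hw'⟩
  exact hlen ▸ (Nat.le_mul_of_pos_right q.den hm).trans (Nat.le_add_right _ _)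

lemma isChristoffelFactorization_mechanicalWord_iff (hq : q ∈ fareyFractions n) :
    IsChristoffelFactorization (mechanicalWord q n) w m w' ↔
      w = mechanicalWord q q.den ∧ m = n / q.den ∧ w' = mechanicalWord q (n % q.den) := by
  refine ⟨fun hfact => ?_, ?_⟩
  · obtain ⟨p, hp, hv, hfact⟩ := exists_mem_fareyFractions_of_isChristoffelFactorization hfact
    rw [length_mechanicalWord] at hp hv hfact
    obtain rfl := (strictMonoOn_mechanicalWord n).injOn hq hp hv
    exact hfact
  · rintro ⟨rfl, rfl, rfl⟩
    exact isChristoffelFactorization_mechanicalWord hq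

lemma oneDensity_of_isPrimRoot_mechanicalWord (hq : q ∈ fareyFractions n)
    (hw : IsPrimRoot (mechanicalWord q n) w) : oneDensity w = q := by
  obtain ⟨m, w', hfact⟩ := isPrimRoot_iff.mp hw
  rw [((isChristoffelFactorization_mechanicalWord_iff hq).mp hfact).1,
    oneDensity_mechanicalWord_den hq.1 hq.2.1]

end Rational

/-- Every `v ∈ PLC(n)` has a unique decomposition `v = w^m·w'` (`w` a
primitive lower Christoffel word, `m ≥ 1`, `w'` a proper prefix of `w`), and the map
`v ↦ |√v|₁/|√v|` is an order-preserving bijection from `PLC(n)` (lexicographic order) onto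
the Farey fractions of order `n` in `[0,1]`. -/
theorem stmt19 (n : ℕ) (hn : 1 ≤ n) :
    (∀ v ∈ PLC n, ∃! t : List Bool × ℕ × List Bool,
      (∃ a b : ℕ, Nat.Coprime a b ∧ t.1 = lowerChristoffel a b) ∧
        1 ≤ t.2.1 ∧ t.2.2 <+: t.1 ∧ t.2.2 ≠ t.1 ∧ v = wpow t.1 t.2.1 ++ t.2.2) ∧
    ∀ f : List Bool → List Bool, (∀ v ∈ PLC n, IsPrimRoot v (f v)) →
      Set.BijOn (fun v => ((f v).count true : ℚ) / ((f v).length : ℚ)) (PLC n)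
        {q : ℚ | 0 ≤ q ∧ q ≤ 1 ∧ q.den ≤ n} ∧
      ∀ v₁ ∈ PLC n, ∀ v₂ ∈ PLC n, List.Lex (· < ·) v₁ v₂ →
        ((f v₁).count true : ℚ) / ((f v₁).length : ℚ) <
          ((f v₂).count true : ℚ) / ((f v₂).length : ℚ) := by
  have hbij := bijOn_mechanicalWord hn
  refine ⟨fun v hv => ?_, fun f hf => ?_⟩
  · obtain ⟨q, hq, rfl⟩ := hbij.surjOn hv
    refine ⟨(mechanicalWord q q.den, n / q.den, mechanicalWord q (n % q.den)),
      isChristoffelFactorization_mechanicalWord hq, fun ⟨w, m, w'⟩ hfact => ?_⟩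
    obtain ⟨rfl, rfl, rfl⟩ := (isChristoffelFactorization_mechanicalWord_iff hq).mp hfact
    rfl
  · have hleft : Set.LeftInvOn (fun v => oneDensity (f v)) (fun q : ℚ => mechanicalWord q n)
        (fareyFractions n) := fun q hq =>
      oneDensity_of_isPrimRoot_mechanicalWord hq (hf _ (hbij.mapsTo hq))
    refine ⟨hbij.symm ⟨?_, hleft⟩, fun v₁ hv₁ v₂ hv₂ hlex => ?_⟩
    · exact hbij.image_eq ▸ hleft.rightInvOn_image
    · obtain ⟨q₁, hq₁, rfl⟩ := hbij.surjOn hv₁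
      obtain ⟨q₂, hq₂, rfl⟩ := hbij.surjOn hv₂
      have hlt : q₁ < q₂ := ((strictMonoOn_mechanicalWord n).lt_iff_lt hq₁ hq₂).mp hlex
      rwa [← hleft hq₁, ← hleft hq₂] at hlt
end
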